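/- Suppose two embedded n-dimensional disks Δ₁ and Δ₂ in a metric space X have identical boundaries (they agree on ∂Dⁿ as embeddings). If X is contractible and the (n+1)-dimensional Hausdorff measure of X vanishes, then Δ₁ = Δ₂ as subsets of X. -/

import Mathlib

open MeasureTheory Metric

/-!
Suppose that `Δ₁` takes a value `p` missed by `Δ₂`. Coning off the common boundary values with a
contraction of `X` gives a homotopy from `Δ₂` to `Δ₁` relative to the sphere. Parametrize the disk
by a cube and continue the homotopy by shrinking `Δ₁` linearly towards `p`, until it misses the
image of `Δ₂`. The result is a map of an `(n + 1)`-cube under which opposite faces have disjoint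
images: bottom and top by the choice of the shrinking, the lateral faces because `Δ₁` is
injective.

For such a map `Φ`, let `Dᵢ` be the distance to the image of the `i`-th lower face. By the
Poincaré–Miranda theorem the `1`-Lipschitz map `(Dᵢ)` maps the image of `Φ` onto a set containing
a nondegenerate box, so that image has positive `(n + 1)`-dimensional Hausdorff measure
(Besicovitch).

Poincaré–Miranda follows from Brouwer's fixed point theorem, which rests on the identity
`∫ φ(x + t g(x)) det(1 + t g'(x)) = ∫ φ` for compactly supported `g`. It holds for small `t`,
where `1 + t g` is a diffeomorphism; for polynomial `φ` the left side is a polynomial in `t`, so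
it holds at `t = 1`, and then for continuous `φ` by the Stone–Weierstrass theorem.
-/

section DegreeFormula

open Polynomial Topology

theorem integral_polynomial_eval_eq_of_infinite {α : Type*} [MeasurableSpace α] {μ : Measure α}
    {P : α → ℝ[X]} {m : ℕ} (hP : ∀ x, (P x).natDegree ≤ m) {T : Set ℝ} (hT : T.Infinite) {c : ℝ}
    (hint : ∀ t ∈ T, Integrable (fun x => (P x).eval t) μ)
    (hc : ∀ t ∈ T, ∫ x, (P x).eval t ∂μ = c) (s : ℝ) :
    ∫ x, (P x).eval s ∂μ = c := by
  obtain ⟨S, hST, hcard⟩ := hT.exists_subset_card_eq (m + 1)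
  have hinj : Set.InjOn id (S : Set ℝ) := Set.injOn_id _
  have hsum (x : α) : (P x).eval s = ∑ t ∈ S, (P x).eval t * (Lagrange.basis S id t).eval s := by
    have hdeg : (P x).degree < S.card :=
      hcard ▸ degree_le_natDegree.trans_lt (mod_cast Nat.lt_succ_of_le (hP x))
    conv_lhs => rw [Lagrange.eq_interpolate hinj hdeg]
    simp [Lagrange.interpolate_apply, eval_finsetSum]
  have hS : S.Nonempty := Finset.card_pos.1 (hcard ▸ m.succ_pos)
  calc ∫ x, (P x).eval s ∂μ
      = ∑ t ∈ S, ∫ x, (P x).eval t * (Lagrange.basis S id t).eval s ∂μ := by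
        simp_rw [hsum]
        exact integral_finsetSum _ fun t ht => (hint t (hST ht)).mul_const _
    _ = ∑ t ∈ S, c * (Lagrange.basis S id t).eval s :=
        Finset.sum_congr rfl fun t ht => by rw [integral_mul_const, hc t (hST ht)]
    _ = c := by
        rw [← Finset.mul_sum, ← eval_finsetSum, Lagrange.sum_basis hinj hS, eval_one, mul_one]

theorem abs_setIntegral_comp_mul_sub_setIntegral_le {α : Type*} [MeasurableSpace α]
    {μ : Measure α} {K : Set α} (hK : MeasurableSet K) (hμK : μ K < ⊤) {φ J : α → ℝ} {f : α → α}
    {ε : ℝ} (hJ : IntegrableOn J K μ) (hφ : ∀ x ∈ K, |φ x| ≤ ε) (hφf : ∀ x ∈ K, |φ (f x)| ≤ ε) :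
    |∫ x in K, φ (f x) * J x ∂μ - ∫ x in K, φ x ∂μ| ≤ ε * (∫ x in K, |J x| ∂μ + μ.real K) := by
  have hcomp : |∫ x in K, φ (f x) * J x ∂μ| ≤ ε * ∫ x in K, |J x| ∂μ := by
    rw [← integral_const_mul]
    refine (Real.norm_eq_abs _).symm.trans_le (norm_integral_le_of_norm_le (hJ.abs.const_mul ε)
      ((ae_restrict_iff' hK).2 (.of_forall fun x hx => ?_)))
    rw [Real.norm_eq_abs, abs_mul]
    gcongr
    exact hφf x hx
  calc |∫ x in K, φ (f x) * J x ∂μ - ∫ x in K, φ x ∂μ|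
      ≤ |∫ x in K, φ (f x) * J x ∂μ| + |∫ x in K, φ x ∂μ| := abs_sub _ _
    _ ≤ ε * ∫ x in K, |J x| ∂μ + ε * μ.real K :=
        add_le_add hcomp <| (Real.norm_eq_abs _).symm.trans_le <|
          norm_setIntegral_le_of_norm_le_const hμK hφ
    _ = ε * (∫ x in K, |J x| ∂μ + μ.real K) := (mul_add _ _ _).symm

variable {E : Type*} [NormedAddCommGroup E] [NormedSpace ℝ E]

theorem bijective_id_add_of_lipschitzWith [CompleteSpace E] {u : E → E} {c : NNReal}
    (hu : LipschitzWith c u) (hc : c < 1) : Function.Bijective fun x => x + u x := by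
  have happrox : ApproximatesLinearOn (fun x => x + u x)
      (ContinuousLinearEquiv.refl ℝ E : E →L[ℝ] E) Set.univ c := by
    rw [ApproximatesLinearOn.approximatesLinearOn_iff_lipschitzOnWith, lipschitzOnWith_univ]
    convert hu using 1
    ext x
    simp
  have hlt : Subsingleton E ∨
      c < ‖((ContinuousLinearEquiv.refl ℝ E).symm : E →L[ℝ] E)‖₊⁻¹ := by
    rcases subsingleton_or_nontrivial E with h | h
    · exact .inl h
    · right; simpa using hc
  exact ⟨Set.injOn_univ.1 (happrox.injOn hlt), happrox.surjective hlt⟩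

theorem image_eq_self_of_forall_notMem_eq {α : Type*} {f : α → α} (hf : f.Bijective) {K : Set α}
    (h : ∀ x ∉ K, f x = x) : f '' K = K := by
  have hcompl : f '' Kᶜ = Kᶜ := (Set.image_congr h).trans (Set.image_id' _)
  rwa [Set.image_compl_eq hf, compl_inj_iff] at hcompl

theorem exists_polynomial_eval_eq_det_id_add_smul [FiniteDimensional ℝ E] (A : E →L[ℝ] E) :
    ∃ P : ℝ[X], P.natDegree ≤ Module.finrank ℝ E ∧
      ∀ t, P.eval t = (ContinuousLinearMap.id ℝ E + t • A).det := by
  let M := LinearMap.toMatrix (Module.finBasis ℝ E) (Module.finBasis ℝ E) A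
  refine ⟨((X : ℝ[X]) • M.map C + (1 : Matrix _ _ ℝ).map C).det, ?_, fun t => ?_⟩
  · simpa using natDegree_det_X_add_C_le M 1
  · have hmatrix : LinearMap.toMatrix (Module.finBasis ℝ E) (Module.finBasis ℝ E)
        (ContinuousLinearMap.id ℝ E + t • A : E →L[ℝ] E) = 1 + t • M := by
      simp [M]
    rw [ContinuousLinearMap.det, ← LinearMap.det_toMatrix (Module.finBasis ℝ E), hmatrix,
      ← coe_evalRingHom, RingHom.map_det]
    congr 1
    ext i j
    simp [Matrix.one_apply, apply_ite (eval t), add_comm, mul_comm t]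

theorem continuous_det_id_add_smul_fderiv [FiniteDimensional ℝ E] {g : E → E}
    (hg : ContDiff ℝ 1 g) :
    Continuous fun z : ℝ × E => (ContinuousLinearMap.id ℝ E + z.1 • fderiv ℝ g z.2).det := by
  have := hg.continuous_fderiv one_ne_zero
  exact ContinuousLinearMap.continuous_det.comp (by fun_prop)

/-- The algebra of polynomial functions on `E`, generated by the continuous linear functionals: the
dense class of test functions that are polynomial along every line. -/
def polynomialMaps (E : Type*) [NormedAddCommGroup E] [NormedSpace ℝ E] : Subalgebra ℝ C(E, ℝ) :=
  Algebra.adjoin ℝ (Set.range fun ℓ : E →L[ℝ] ℝ => (ℓ : C(E, ℝ)))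

theorem separatesPoints_polynomialMaps : (polynomialMaps E).SeparatesPoints := by
  intro x y hxy
  obtain ⟨ℓ, hℓ⟩ := SeparatingDual.exists_separating_of_ne (R := ℝ) hxy
  exact ⟨_, ⟨ℓ, Algebra.subset_adjoin ⟨ℓ, rfl⟩, rfl⟩, hℓ⟩

theorem exists_polynomial_eval_eq_of_mem_polynomialMaps {φ : C(E, ℝ)}
    (hφ : φ ∈ polynomialMaps E) :
    ∃ m : ℕ, ∀ x v : E, ∃ P : ℝ[X], P.natDegree ≤ m ∧ ∀ t, P.eval t = φ (x + t • v) := by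
  induction hφ using Algebra.adjoin_induction with
  | mem _ h =>
    obtain ⟨ℓ, rfl⟩ := h
    exact ⟨1, fun x v => ⟨C (ℓ v) * X + C (ℓ x), natDegree_linear_le, fun t => by
      simp only [eval_add, eval_mul, eval_C, eval_X, ContinuousMap.coe_mk, map_add, map_smul,
        smul_eq_mul]
      ring⟩⟩
  | algebraMap r => exact ⟨0, fun x v => ⟨C r, by simp, fun t => by simp⟩⟩
  | add φ ψ _ _ hφ hψ =>
    obtain ⟨m, hm⟩ := hφ
    obtain ⟨k, hk⟩ := hψ
    refine ⟨max m k, fun x v => ?_⟩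
    obtain ⟨P, hP, hPφ⟩ := hm x v
    obtain ⟨Q, hQ, hQψ⟩ := hk x v
    exact ⟨P + Q, natDegree_add_le_of_le hP hQ, fun t => by simp [hPφ, hQψ]⟩
  | mul φ ψ _ _ hφ hψ =>
    obtain ⟨m, hm⟩ := hφ
    obtain ⟨k, hk⟩ := hψ
    refine ⟨m + k, fun x v => ?_⟩
    obtain ⟨P, hP, hPφ⟩ := hm x v
    obtain ⟨Q, hQ, hQψ⟩ := hk x v
    exact ⟨P * Q, natDegree_mul_le_of_le hP hQ, fun t => by simp [hPφ, hQψ]⟩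

variable [FiniteDimensional ℝ E] [MeasurableSpace E] [BorelSpace E] {μ : Measure E}
  [μ.IsAddHaarMeasure] {g : E → E} {K : Set E}

theorem eventually_setIntegral_comp_id_add_smul_mul_det (hg : ContDiff ℝ 1 g) (hK : IsCompact K)
    (hgK : ∀ x ∉ K, g x = 0) :
    ∀ᶠ t : ℝ in 𝓝 0, ∀ φ : E → ℝ,
      ∫ x in K, φ (x + t • g x) * (ContinuousLinearMap.id ℝ E + t • fderiv ℝ g x).det ∂μ =
        ∫ x in K, φ x ∂μ := by
  obtain ⟨L, hL⟩ := ContDiff.lipschitzWith_of_hasCompactSupport (.intro hK hgK) hg one_ne_zero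
  have hlip : ∀ᶠ t : ℝ in 𝓝 0, ‖t‖₊ * L < 1 :=
    (continuous_nnnorm.mul continuous_const).continuousAt.eventually_lt_const (by simp)
  have hdet : ∀ᶠ t : ℝ in 𝓝 0, ∀ x ∈ K,
      0 < (ContinuousLinearMap.id ℝ E + t • fderiv ℝ g x).det :=
    hK.eventually_forall_of_forall_eventually fun x _ =>
      (continuous_det_id_add_smul_fderiv hg).continuousAt.eventually_const_lt
        (by simp [ContinuousLinearMap.det])
  filter_upwards [hlip, hdet] with t htL htdet φ
  have hbij : Function.Bijective fun x => x + t • g x :=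
    bijective_id_add_of_lipschitzWith ((lipschitzWith_smul t).comp hL) htL
  have himage : (fun x => x + t • g x) '' K = K :=
    image_eq_self_of_forall_notMem_eq hbij fun x hx => by simp [hgK x hx]
  have hderiv (x : E) : HasFDerivAt (fun x => x + t • g x)
      (ContinuousLinearMap.id ℝ E + t • fderiv ℝ g x) x :=
    (hasFDerivAt_id x).add (((hg.differentiable one_ne_zero) x).hasFDerivAt.const_smul t)
  have hchange := integral_image_eq_integral_abs_det_fderiv_smul μ hK.measurableSet
    (fun x _ => (hderiv x).hasFDerivWithinAt) hbij.injective.injOn φ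
  rw [himage] at hchange
  rw [hchange]
  refine setIntegral_congr_fun hK.measurableSet fun x hx => ?_
  simp only [abs_of_pos (htdet x hx), smul_eq_mul, mul_comm]

theorem setIntegral_comp_id_add_mul_det_of_mem_polynomialMaps (hg : ContDiff ℝ 1 g)
    (hK : IsCompact K) (hgK : ∀ x ∉ K, g x = 0) {φ : C(E, ℝ)} (hφ : φ ∈ polynomialMaps E) :
    ∫ x in K, φ (x + g x) * (ContinuousLinearMap.id ℝ E + fderiv ℝ g x).det ∂μ =
      ∫ x in K, φ x ∂μ := by
  obtain ⟨m, hm⟩ := exists_polynomial_eval_eq_of_mem_polynomialMaps hφ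
  choose P hPdeg hPeval using fun x => hm x (g x)
  choose Q hQdeg hQeval using fun x => exists_polynomial_eval_eq_det_id_add_smul (fderiv ℝ g x)
  have heval (t : ℝ) (x : E) : (P x * Q x).eval t =
      φ (x + t • g x) * (ContinuousLinearMap.id ℝ E + t • fderiv ℝ g x).det := by
    rw [eval_mul, hPeval, hQeval]
  have hcont (t : ℝ) : Continuous fun x => (P x * Q x).eval t := by
    simp only [heval]
    exact (φ.continuous.comp (continuous_id.add (hg.continuous.const_smul t))).mul
      ((continuous_det_id_add_smul_fderiv hg).comp (Continuous.prodMk_right t))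
  have hsmall := eventually_setIntegral_comp_id_add_smul_mul_det (μ := μ) hg hK hgK
  have hone := integral_polynomial_eval_eq_of_infinite (μ := μ.restrict K)
    (fun x => natDegree_mul_le_of_le (hPdeg x) (hQdeg x)) (infinite_of_mem_nhds 0 hsmall)
    (fun t _ => (hcont t).continuousOn.integrableOn_compact hK)
    (fun t ht => by simp only [heval]; exact ht φ) 1
  simpa only [heval, one_smul] using hone

theorem setIntegral_comp_id_add_mul_det (hg : ContDiff ℝ 1 g) (hK : IsCompact K)
    (hgK : ∀ x ∉ K, g x = 0) (φ : C(E, ℝ)) :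
    ∫ x in K, φ (x + g x) * (ContinuousLinearMap.id ℝ E + fderiv ℝ g x).det ∂μ =
      ∫ x in K, φ x ∂μ := by
  set J : E → ℝ := fun x => (ContinuousLinearMap.id ℝ E + fderiv ℝ g x).det
  have hJ : Continuous J := ContinuousLinearMap.continuous_det.comp
    (continuous_const.add (hg.continuous_fderiv one_ne_zero))
  have hf : Continuous fun x => x + g x := continuous_id.add hg.continuous
  have hint {u : E → ℝ} (hu : Continuous u) : IntegrableOn u K μ :=
    hu.continuousOn.integrableOn_compact hK
  set M := ∫ x in K, |J x| ∂μ + μ.real K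
  suffices h : ∀ ε > 0, |∫ x in K, φ (x + g x) * J x ∂μ - ∫ x in K, φ x ∂μ| ≤ ε * M by
    have hlim : Filter.Tendsto (fun ε : ℝ => ε * M) (𝓝[>] 0) (𝓝 0) :=
      tendsto_nhdsWithin_of_tendsto_nhds <| by
        simpa using (Filter.tendsto_id (x := 𝓝 (0 : ℝ))).mul_const M
    exact sub_eq_zero.1 (abs_nonpos_iff.1 (ge_of_tendsto hlim (eventually_mem_nhdsWithin.mono h)))
  intro ε hε
  obtain ⟨p, hp, hpφ⟩ :=
    ContinuousMap.exists_mem_subalgebra_near_continuous_of_isCompact_of_separatesPoints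
      separatesPoints_polynomialMaps φ (hK.union (hK.image hf)) hε
  have hdiff : ∫ x in K, φ (x + g x) * J x ∂μ - ∫ x in K, φ x ∂μ =
      ∫ x in K, (φ - p) (x + g x) * J x ∂μ - ∫ x in K, (φ - p) x ∂μ := by
    simp only [ContinuousMap.sub_apply, sub_mul]
    rw [integral_sub, integral_sub,
      setIntegral_comp_id_add_mul_det_of_mem_polynomialMaps hg hK hgK hp]
    · ring
    all_goals exact hint (by fun_prop)
  have hclose (x : E) (hx : x ∈ K ∪ (fun x => x + g x) '' K) : |(φ - p) x| ≤ ε := by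
    simpa [abs_sub_comm] using (hpφ x hx).le
  rw [hdiff]
  exact abs_setIntegral_comp_mul_sub_setIntegral_le hK.measurableSet hK.measure_lt_top (hint hJ)
    (fun x hx => hclose x (.inl hx)) (fun x hx => hclose _ (.inr ⟨x, hx, rfl⟩))

end DegreeFormula

section Surjectivity

variable {E : Type*} [NormedAddCommGroup E] [NormedSpace ℝ E] [FiniteDimensional ℝ E] {g : E → E}

theorem surjective_id_add_of_contDiff_of_hasCompactSupport (hg : ContDiff ℝ 1 g)
    (hsupp : HasCompactSupport g) : Function.Surjective fun x => x + g x := by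
  borelize E
  let μ : Measure E := Measure.addHaar
  intro q
  by_contra! hq
  set f : E → E := fun x => x + g x
  set K := tsupport g ∪ closedBall q 1
  have hK : IsCompact K := hsupp.isCompact.union (isCompact_closedBall q 1)
  have hfK : IsCompact (f '' K) := hK.image (continuous_id.add hg.continuous)
  let φ : C(E, ℝ) := ⟨fun y => infDist y (f '' K), continuous_infDist_pt _⟩
  have hφ : ∫ x in K, φ x ∂μ = 0 := by
    rw [← setIntegral_comp_id_add_mul_det hg hK
      (fun x hx => image_eq_zero_of_notMem_tsupport fun h => hx (.inl h))]
    refine setIntegral_eq_zero_of_forall_eq_zero fun x hx => ?_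
    have hφf : φ (f x) = 0 := infDist_zero_of_mem (Set.mem_image_of_mem f hx)
    rw [hφf, zero_mul]
  have hball : ball q 1 ⊆ K := ball_subset_closedBall.trans Set.subset_union_right
  have hφ_ball : Set.EqOn φ 0 (ball q 1) := by
    refine Measure.eqOn_open_of_ae_eq (μ := μ) ?_ isOpen_ball φ.continuous.continuousOn
      continuousOn_const
    refine ae_restrict_of_ae_restrict_of_subset hball ?_
    exact (setIntegral_eq_zero_iff_of_nonneg_ae (.of_forall fun _ => infDist_nonneg)
      (φ.continuous.continuousOn.integrableOn_compact hK)).1 hφ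
  have hne : (f '' K).Nonempty := ⟨f q, q, .inr (mem_closedBall_self zero_le_one), rfl⟩
  have hqK : q ∉ f '' K := fun ⟨x, _, hx⟩ => hq x hx
  exact (hfK.isClosed.notMem_iff_infDist_pos hne).1 hqK |>.ne' (hφ_ball (mem_ball_self one_pos))

theorem surjective_id_add_of_hasCompactSupport (hg : Continuous g) (hsupp : HasCompactSupport g) :
    Function.Surjective fun x => x + g x := by
  intro q
  by_contra! hq
  obtain ⟨g', hg', hdist, hsub⟩ := hg.exists_contDiff_approx 1
    (ε := fun x => dist (x + g x) q) (by fun_prop) fun x => dist_pos.2 (hq x)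
  obtain ⟨x, hx⟩ := surjective_id_add_of_contDiff_of_hasCompactSupport hg' (hsupp.mono hsub) q
  have hlt := hdist x
  rw [← hx, dist_add_left, dist_comm] at hlt
  exact hlt.false

theorem exists_isFixedPt_of_isBounded_range {h : E → E} (hh : Continuous h)
    (hbdd : Bornology.IsBounded (Set.range h)) : ∃ x, Function.IsFixedPt h x := by
  obtain ⟨R, hR, hhR⟩ := hbdd.exists_pos_norm_le
  let χ : ContDiffBump (0 : E) := ⟨R, R + 1, hR, by linarith⟩
  obtain ⟨x, hx⟩ := surjective_id_add_of_hasCompactSupport (g := fun x => -(χ x • h x))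
    (χ.continuous.smul hh).neg χ.hasCompactSupport.smul_right.neg 0
  have hx' : χ x • h x = x := (eq_of_sub_eq_zero (by simpa [sub_eq_add_neg] using hx)).symm
  have hnorm : ‖x‖ ≤ R := calc
    ‖x‖ = χ x * ‖h x‖ := by rw [← Real.norm_of_nonneg χ.nonneg, ← norm_smul, hx']
    _ ≤ 1 * R := by gcongr; exacts [χ.le_one, hhR _ ⟨x, rfl⟩]
    _ = R := one_mul R
  rw [χ.one_of_mem_closedBall (mem_closedBall_zero_iff.2 hnorm), one_smul] at hx'
  exact ⟨x, hx'⟩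

end Surjectivity

section Cube

open scoped unitInterval ENNReal NNReal Topology

variable {ι : Type*}

theorem exists_eq_zero_of_forall_face_sign [Finite ι] {F : (ι → I) → ι → ℝ} (hF : Continuous F)
    (hneg : ∀ x i, x i = 0 → F x i ≤ 0) (hpos : ∀ x i, x i = 1 → 0 ≤ F x i) :
    ∃ x, F x = 0 := by
  have := Fintype.ofFinite ι
  let p : (ι → ℝ) → ι → I := fun x i => Set.projIcc 0 1 zero_le_one (x i)
  have hp : Continuous p := by unfold p; fun_prop
  let h : (ι → I) → ι → ℝ := fun y i => y i - F y i
  have hh : Continuous h := by unfold h; fun_prop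
  obtain ⟨x, hx⟩ := exists_isFixedPt_of_isBounded_range (hh.comp hp)
    ((isCompact_range hh).isBounded.subset (Set.range_comp_subset_range p h))
  refine ⟨p x, funext fun i => ?_⟩
  have hxi : (p x i : ℝ) - F (p x) i = x i := congrFun hx i
  rcases lt_or_ge (x i) 0 with h0 | h0
  · have hpi : p x i = 0 := Set.projIcc_of_le_left _ h0.le
    have := hneg _ i hpi
    rw [hpi, Set.Icc.coe_zero] at hxi
    linarith
  rcases lt_or_ge 1 (x i) with h1 | h1
  · have hpi : p x i = 1 := Set.projIcc_of_right_le _ h1.le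
    have := hpos _ i hpi
    rw [hpi, Set.Icc.coe_one] at hxi
    linarith
  · have hpi : (p x i : ℝ) = x i := congrArg Subtype.val (Set.projIcc_of_mem _ ⟨h0, h1⟩)
    rw [Pi.zero_apply]
    linarith

variable [Fintype ι] {X : Type*} [MetricSpace X] [MeasurableSpace X] [BorelSpace X]

theorem prod_le_hausdorffMeasure_range_of_le_dist_opposite_faces {Φ : (ι → I) → X}
    (hΦ : Continuous Φ) {r : ι → ℝ≥0} (hr : ∀ i x y, x i = 0 → y i = 1 → r i ≤ dist (Φ x) (Φ y)) :
    ∏ i, (r i : ℝ≥0∞) ≤ μH[Fintype.card ι] (Set.range Φ) := by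
  let face (i : ι) : Set X := Φ '' {x | x i = 0}
  let D : X → ι → ℝ := fun p i => infDist p (face i)
  have hD : LipschitzWith 1 D := LipschitzWith.of_dist_le_mul fun p q =>
    (dist_pi_le_iff (by positivity)).2 fun i => (lipschitz_infDist_pt (face i)).dist_le_mul p q
  have hbox : Set.univ.pi (fun i => Set.Icc 0 (r i : ℝ)) ⊆ D '' Set.range Φ := fun q hq => by
    obtain ⟨x, hx⟩ := exists_eq_zero_of_forall_face_sign
      (F := fun x => D (Φ x) - q) ((hD.continuous.comp hΦ).sub continuous_const)
      (fun x i hxi => by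
        have : D (Φ x) i = 0 := infDist_zero_of_mem ⟨x, hxi, rfl⟩
        simpa [this] using (hq i trivial).1)
      (fun x i hxi => by
        have hne : (face i).Nonempty := ⟨_, 0, rfl, rfl⟩
        refine sub_nonneg.2 ((hq i trivial).2.trans ((le_infDist hne).2 ?_))
        rintro _ ⟨y, hy, rfl⟩
        exact (hr i y x hy hxi).trans_eq (dist_comm _ _))
    exact ⟨Φ x, ⟨x, rfl⟩, sub_eq_zero.1 hx⟩
  calc ∏ i, (r i : ℝ≥0∞) = volume (Set.univ.pi fun i => Set.Icc 0 (r i : ℝ)) := by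
        rw [volume_pi_pi]
        simp
    _ = μH[Fintype.card ι] (Set.univ.pi fun i => Set.Icc 0 (r i : ℝ)) := by
        rw [hausdorffMeasure_pi_real]
    _ ≤ μH[Fintype.card ι] (D '' Set.range Φ) := measure_mono hbox
    _ ≤ μH[Fintype.card ι] (Set.range Φ) :=
        (hD.hausdorffMeasure_image_le (Nat.cast_nonneg _) _).trans_eq <| by
          rw [ENNReal.coe_one, ENNReal.one_rpow, one_mul]

theorem hausdorffMeasure_range_pos_of_disjoint_opposite_faces {Φ : (ι → I) → X}
    (hΦ : Continuous Φ) (hdisj : ∀ i x y, x i = 0 → y i = 1 → Φ x ≠ Φ y) :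
    0 < μH[Fintype.card ι] (Set.range Φ) := by
  have hgap (i : ι) : ∃ r : ℝ≥0, 0 < r ∧ ∀ x y, x i = 0 → y i = 1 → r ≤ dist (Φ x) (Φ y) := by
    have hcompact (a : I) : IsCompact (Φ '' {x | x i = a}) :=
      (isClosed_eq (continuous_apply i) continuous_const).isCompact.image hΦ
    have hd : Disjoint (Φ '' {x | x i = 0}) (Φ '' {x | x i = 1}) := by
      rw [Set.disjoint_left]
      rintro _ ⟨x, hx, rfl⟩ ⟨y, hy, hxy⟩
      exact hdisj i x y hx hy hxy.symm
    obtain ⟨r, hr, hlt⟩ := exists_pos_forall_lt_edist (hcompact 0) (hcompact 1).isClosed hd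
    refine ⟨r, hr, fun x y hx hy => ?_⟩
    have := hlt _ ⟨x, hx, rfl⟩ _ ⟨y, hy, rfl⟩
    rw [edist_nndist] at this
    exact_mod_cast this.le
  choose r hr hrdist using hgap
  refine lt_of_lt_of_le ?_ (prod_le_hausdorffMeasure_range_of_le_dist_opposite_faces hΦ hrdist)
  exact CanonicallyOrderedAdd.prod_pos.2 fun i _ => ENNReal.coe_pos.2 (hr i)

theorem hausdorffMeasure_range_pos_of_disjoint_opposite_faces_prod {Φ : I × (ι → I) → X}
    (hΦ : Continuous Φ) (hbase : ∀ x y, Φ (0, x) ≠ Φ (1, y))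
    (hside : ∀ i s t x y, x i = 0 → y i = 1 → Φ (s, x) ≠ Φ (t, y)) :
    0 < μH[(Fintype.card ι : ℝ) + 1] (Set.range Φ) := by
  let split : (Option ι → I) → I × (ι → I) := fun z => (z none, fun i => z (some i))
  have hsplit : Continuous split := by unfold split; fun_prop
  have hpos := hausdorffMeasure_range_pos_of_disjoint_opposite_faces (hΦ.comp hsplit) fun i => ?_
  · rw [Fintype.card_option, Nat.cast_succ] at hpos
    exact hpos.trans_le (measure_mono (Set.range_comp_subset_range split Φ))
  intro x y hx hy
  cases i with
  | none => simpa only [Function.comp_apply, split, hx, hy] using hbase _ _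
  | some i => exact hside i _ _ _ _ hx hy

end Cube

section CubeFilling

open scoped unitInterval Topology

variable {ι : Type*} {x₀ : ι → I}

/-- The straight-line contraction of the cube `ι → I` to the point `x₀`, used to shrink one disk
towards a point that the other one misses. -/
def cubeContraction (x₀ : ι → I) :
    (ContinuousMap.id (ι → I)).Homotopy (ContinuousMap.const (ι → I) x₀) where
  toFun p i := Set.Icc.convexComb (p.2 i) (x₀ i) p.1
  continuous_toFun := continuous_pi fun i =>
    Set.Icc.continuous_convexComb_prod.comp
      (f := fun p : I × (ι → I) => (p.2 i, x₀ i, p.1)) (by fun_prop)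
  map_zero_left _ := by simp
  map_one_left _ := by simp

theorem coe_cubeContraction_apply (x₀ x : ι → I) (s : I) (i : ι) :
    (cubeContraction x₀ (s, x) i : ℝ) = (1 - s) * x i + s * x₀ i :=
  rfl

theorem cubeContraction_ne_cubeContraction_of_opposite_faces (hx₀ : x₀ ∉ Cube.boundary ι)
    {s t : I} (hs : s < 1) (ht : t < 1) {x y : ι → I} {i : ι} (hx : x i = 0) (hy : y i = 1) :
    cubeContraction x₀ (s, x) ≠ cubeContraction x₀ (t, y) := by
  intro h
  have hi := congrArg Subtype.val (congrFun h i)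
  rw [coe_cubeContraction_apply, coe_cubeContraction_apply, hx, hy, Set.Icc.coe_zero,
    Set.Icc.coe_one] at hi
  have h0 : (0 : ℝ) < x₀ i := unitInterval.pos_iff_ne_zero.2 fun h => hx₀ ⟨i, .inl h⟩
  have h1 : (x₀ i : ℝ) < 1 := unitInterval.lt_one_iff_ne_one.2 fun h => hx₀ ⟨i, .inr h⟩
  have hs' : (s : ℝ) < 1 := hs
  have ht' : (t : ℝ) < 1 := ht
  nlinarith

theorem exists_lt_one_forall_cubeContraction_notMem {Y : Type*} [TopologicalSpace Y]
    {f : (ι → I) → Y} (hf : Continuous f) {C : Set Y} (hC : IsClosed C) (hx₀ : f x₀ ∉ C) :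
    ∃ s < (1 : I), ∀ x, f (cubeContraction x₀ (s, x)) ∉ C := by
  have hev : ∀ᶠ s in 𝓝 (1 : I), ∀ x ∈ Set.univ, f (cubeContraction x₀ (s, x)) ∉ C :=
    isCompact_univ.eventually_forall_of_forall_eventually fun x _ =>
      (hf.comp (map_continuous (cubeContraction x₀))).continuousAt.eventually
        (hC.isOpen_compl.mem_nhds (by simpa using hx₀))
  have : (𝓝[<] (1 : I)).NeBot := nhdsLT_neBot_of_exists_lt ⟨0, zero_lt_one⟩
  obtain ⟨s, hs, hs1⟩ :=
    ((hev.filter_mono nhdsWithin_le_nhds).and (self_mem_nhdsWithin (s := Set.Iio 1))).exists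
  exact ⟨s, hs1, fun x => hs x trivial⟩

variable [Fintype ι] {X : Type*} [MetricSpace X] [MeasurableSpace X] [BorelSpace X]

theorem range_subset_range_of_cube_homotopyRel {f g : C(ι → I, X)} (hf : Function.Injective f)
    (H : f.HomotopyRel g (Cube.boundary ι))
    (hH : μH[(Fintype.card ι : ℝ) + 1] (Set.range H) = 0) : Set.range f ⊆ Set.range g := by
  rintro _ ⟨x₀, rfl⟩
  by_contra hx₀
  have hx₀_int : x₀ ∉ Cube.boundary ι := fun h => hx₀ ⟨x₀, (H.fst_eq_snd h).symm⟩
  obtain ⟨s, hs, hsg⟩ := exists_lt_one_forall_cubeContraction_notMem f.continuous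
    (isCompact_range g.continuous).isClosed hx₀
  let f' : C(ι → I, X) := ⟨fun x => f (cubeContraction x₀ (s, x)), by fun_prop⟩
  let G : f.Homotopy f' :=
    { toFun := fun p => f (cubeContraction x₀ (p.1 * s, p.2))
      continuous_toFun := by fun_prop
      map_zero_left := fun x => by simp
      map_one_left := fun x => by simp [f'] }
  let Γ : g.Homotopy f' := H.symm.toHomotopy.trans G
  have hside (t : I) {x : ι → I} (hx : x ∈ Cube.boundary ι) :
      ∃ a < (1 : I), Γ (t, x) = f (cubeContraction x₀ (a, x)) := by
    simp only [Γ, ContinuousMap.Homotopy.trans_apply]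
    split_ifs
    · exact ⟨0, zero_lt_one, by rw [ContinuousMap.Homotopy.apply_zero]; exact H.symm.eq_snd _ hx⟩
    · exact ⟨_, unitInterval.mul_le_right.trans_lt hs, rfl⟩
  have hrange : Set.range Γ ⊆ Set.range H := by
    rintro _ ⟨p, rfl⟩
    simp only [Γ, ContinuousMap.Homotopy.trans_apply]
    split_ifs
    · exact ⟨_, rfl⟩
    · exact ⟨(0, _), H.apply_zero _⟩
  refine (hausdorffMeasure_range_pos_of_disjoint_opposite_faces_prod Γ.continuous
    (fun x y hxy => hsg y ⟨x, ?_⟩) fun i t u x y hx hy hxy => ?_).ne' (measure_mono_null hrange hH)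
  · rwa [Γ.apply_zero, Γ.apply_one] at hxy
  · obtain ⟨a, ha, hxa⟩ := hside t ⟨i, .inl hx⟩
    obtain ⟨b, hb, hyb⟩ := hside u ⟨i, .inr hy⟩
    exact cubeContraction_ne_cubeContraction_of_opposite_faces hx₀_int ha hb hx hy
      (hf (hxa.symm.trans (hxy.trans hyb)))

end CubeFilling

section ConeHomotopy

open scoped unitInterval

variable {E : Type*} [NormedAddCommGroup E]

/-- The radius `max (1 - t) ‖x‖` that `radialExpansion` at time `t` expands to `1`: it is at least
`‖x‖`, so that the expanded point stays in the disk. -/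
def shrinkingRadius (p : I × closedBall (0 : E) 1) : ℝ :=
  max (1 - p.1) ‖(p.2 : E)‖

theorem continuous_shrinkingRadius : Continuous (shrinkingRadius (E := E)) := by
  unfold shrinkingRadius
  fun_prop

variable [NormedSpace ℝ E]

/-- The map `(t, x) ↦ x / r`, where `r = shrinkingRadius (t, x)` is replaced by `1 / 2` when
smaller, since `x / r` has no limit at `(1, 0)`. -/
noncomputable def radialExpansion : C(I × closedBall (0 : E) 1, closedBall (0 : E) 1) where
  toFun p := ⟨(max (shrinkingRadius p) (1 / 2))⁻¹ • (p.2 : E), mem_closedBall_zero_iff.2 <| by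
    have hpos : 0 < max (shrinkingRadius p) (1 / 2) := lt_max_of_lt_right one_half_pos
    rw [norm_smul, norm_inv, Real.norm_of_nonneg hpos.le, inv_mul_le_one₀ hpos]
    exact (le_max_right _ _).trans (le_max_left _ _)⟩
  continuous_toFun := by
    have := continuous_shrinkingRadius (E := E)
    refine .subtype_mk (.smul (.inv₀ (by fun_prop) fun p => ?_) (by fun_prop)) _
    exact (lt_max_of_lt_right one_half_pos).ne'

theorem radialExpansion_of_shrinkingRadius_eq_one {p : I × closedBall (0 : E) 1}
    (hp : shrinkingRadius p = 1) : radialExpansion p = p.2 :=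
  Subtype.ext (by norm_num [radialExpansion, hp])

theorem norm_radialExpansion_one {x : closedBall (0 : E) 1} (hx : 1 / 2 ≤ ‖(x : E)‖) :
    ‖(radialExpansion (1, x) : E)‖ = 1 := by
  have hx₀ : ‖(x : E)‖ ≠ 0 := (one_half_pos.trans_le hx).ne'
  have hr : max (shrinkingRadius (1, x)) (1 / 2) = ‖(x : E)‖ := by
    simpa [shrinkingRadius] using hx
  change ‖(max (shrinkingRadius (1, x)) (1 / 2))⁻¹ • (x : E)‖ = 1
  rw [hr, norm_smul, norm_inv, norm_norm, inv_mul_cancel₀ hx₀]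

variable {X : Type*} [TopologicalSpace X] {y₀ : X}

/-- The homotopy from `f` to the cone over its restriction to the unit sphere. With
`r = shrinkingRadius (t, x)`, it is `K` at time `2 (1 - r)` applied to `f (x / r)`; as `K` is
constant from time `1` on, the values of `radialExpansion` where `r < 1 / 2` are irrelevant. -/
noncomputable def coneHomotopy (K : (ContinuousMap.id X).Homotopy (ContinuousMap.const X y₀))
    (f : C(closedBall (0 : E) 1, X)) : C(I × closedBall (0 : E) 1, X) where
  toFun p := K (Set.projIcc 0 1 zero_le_one (2 * (1 - shrinkingRadius p)), f (radialExpansion p))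
  continuous_toFun := by
    have := continuous_shrinkingRadius (E := E)
    fun_prop

theorem coneHomotopy_of_shrinkingRadius_eq_one
    (K : (ContinuousMap.id X).Homotopy (ContinuousMap.const X y₀))
    (f : C(closedBall (0 : E) 1, X)) {p : I × closedBall (0 : E) 1} (hp : shrinkingRadius p = 1) :
    coneHomotopy K f p = f p.2 := by
  simp [coneHomotopy, radialExpansion_of_shrinkingRadius_eq_one hp, hp]

theorem coneHomotopy_one_congr (K : (ContinuousMap.id X).Homotopy (ContinuousMap.const X y₀))
    {f g : C(closedBall (0 : E) 1, X)}
    (hfg : ∀ x : closedBall (0 : E) 1, ‖(x : E)‖ = 1 → f x = g x) (x : closedBall (0 : E) 1) :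
    coneHomotopy K f (1, x) = coneHomotopy K g (1, x) := by
  rcases le_total ‖(x : E)‖ (1 / 2) with hx | hx
  · have hK : Set.projIcc 0 1 zero_le_one (2 * (1 - shrinkingRadius (1, x))) = 1 :=
      Set.projIcc_of_right_le _ <| by
        simp only [shrinkingRadius, Set.Icc.coe_one, sub_self, norm_nonneg, sup_of_le_right]
        linarith
    simp [coneHomotopy, hK]
  · simp [coneHomotopy, hfg _ (norm_radialExpansion_one hx)]

theorem homotopicRel_coneHomotopy_one
    (K : (ContinuousMap.id X).Homotopy (ContinuousMap.const X y₀))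
    (f : C(closedBall (0 : E) 1, X)) :
    f.HomotopicRel ((coneHomotopy K f).curry 1) {x | ‖(x : E)‖ = 1} :=
  ⟨{ toContinuousMap := coneHomotopy K f
     map_zero_left := fun x => coneHomotopy_of_shrinkingRadius_eq_one K f
      (by simpa [shrinkingRadius] using mem_closedBall_zero_iff.1 x.2)
     map_one_left := fun x => rfl
     prop' := fun t x hx => coneHomotopy_of_shrinkingRadius_eq_one K f
      (by simpa [shrinkingRadius, show ‖(x : E)‖ = 1 from hx] using t.2.1) }⟩

theorem homotopicRel_of_forall_norm_eq_one_imp_eq [ContractibleSpace X]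
    {f g : C(closedBall (0 : E) 1, X)}
    (hfg : ∀ x : closedBall (0 : E) 1, ‖(x : E)‖ = 1 → f x = g x) :
    f.HomotopicRel g {x | ‖(x : E)‖ = 1} := by
  obtain ⟨y₀, ⟨K⟩⟩ := id_nullhomotopic X
  have hcone : (coneHomotopy K f).curry 1 = (coneHomotopy K g).curry 1 :=
    ContinuousMap.ext (coneHomotopy_one_congr K hfg)
  exact (homotopicRel_coneHomotopy_one K f).trans
    (hcone ▸ (homotopicRel_coneHomotopy_one K g).symm)

end ConeHomotopy

section Disks

open scoped unitInterval

theorem interior_pi_unitInterval_nonempty (ι : Type*) [Finite ι] :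
    (interior (Set.univ.pi fun _ : ι => I)).Nonempty := by
  rw [interior_pi_set Set.finite_univ, interior_Icc]
  exact Set.univ_pi_nonempty_iff.2 fun _ => Set.nonempty_Ioo.2 one_pos

theorem mem_interior_pi_unitInterval_iff {ι : Type*} [Finite ι] (x : ι → I) :
    (fun i => (x i : ℝ)) ∈ interior (Set.univ.pi fun _ : ι => I) ↔ x ∉ Cube.boundary ι := by
  rw [interior_pi_set Set.finite_univ]
  simp [Cube.boundary, unitInterval.pos_iff_ne_zero, unitInterval.lt_one_iff_ne_one, forall_and]

variable {E : Type*} [NormedAddCommGroup E] [NormedSpace ℝ E]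

theorem exists_homeomorph_cube_closedBall [FiniteDimensional ℝ E] :
    ∃ e : (Fin (Module.finrank ℝ E) → I) ≃ₜ closedBall (0 : E) 1,
      ∀ x, x ∈ Cube.boundary _ ↔ ‖(e x : E)‖ = 1 := by
  set n := Module.finrank ℝ E
  let L : (Fin n → ℝ) ≃L[ℝ] E := ContinuousLinearEquiv.ofFinrankEq (by simp [n])
  let C : Set (Fin n → ℝ) := Set.univ.pi fun _ => I
  have hLC : IsCompact (L '' C) :=
    (isCompact_univ_pi fun _ => isCompact_Icc).image L.continuous
  have hint : interior (L '' C) = L '' interior C := (L.toHomeomorph.image_interior C).symm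
  obtain ⟨h, hball, hclosed, -⟩ :=
    exists_homeomorph_image_interior_closure_frontier_eq_unitBall (s := L '' C)
      ((convex_pi fun _ _ => convex_Icc 0 1).is_linear_image L.toLinearMap.isLinear)
      (hint ▸ (interior_pi_unitInterval_nonempty _).image L) hLC.isBounded
  rw [hint] at hball
  rw [hLC.isClosed.closure_eq] at hclosed
  have hmem_ball (x : Fin n → ℝ) : h (L x) ∈ ball 0 1 ↔ x ∈ interior C := by
    rw [← hball, h.injective.mem_set_image, L.injective.mem_set_image]
  have hmem_closedBall (x : Fin n → ℝ) : h (L x) ∈ closedBall 0 1 ↔ x ∈ C := by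
    rw [← hclosed, h.injective.mem_set_image, L.injective.mem_set_image]
  let k : (Fin n → ℝ) ≃ₜ E := L.toHomeomorph.trans h
  let e : (Fin n → I) ≃ closedBall (0 : E) 1 :=
    Equiv.subtypePiEquivPi.symm.trans <| k.toEquiv.subtypeEquiv fun x =>
      Set.mem_univ_pi.symm.trans (hmem_closedBall x).symm
  have he : Continuous e := by
    refine Continuous.subtype_mk (k.continuous.comp ?_) _
    fun_prop
  refine ⟨he.homeoOfEquivCompactToT2, fun x => ?_⟩
  have hx : ‖(e x : E)‖ ≤ 1 := mem_closedBall_zero_iff.1 (e x).2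
  calc x ∈ Cube.boundary _ ↔ (e x : E) ∉ ball 0 1 := by
        rw [← not_iff_not, not_not, ← mem_interior_pi_unitInterval_iff]
        exact (hmem_ball _).symm
    _ ↔ ‖(e x : E)‖ = 1 := by rw [mem_ball_zero_iff, not_lt, hx.ge_iff_eq', eq_comm]

variable {X : Type*}

theorem range_subset_range_of_closedBall_homotopyRel [FiniteDimensional ℝ E] [MetricSpace X]
    [MeasurableSpace X] [BorelSpace X] {f g : C(closedBall (0 : E) 1, X)}
    (hf : Function.Injective f) (H : f.HomotopyRel g {x | ‖(x : E)‖ = 1})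
    (hH : μH[(Module.finrank ℝ E : ℝ) + 1] (Set.range H) = 0) : Set.range f ⊆ Set.range g := by
  obtain ⟨e, he⟩ := exists_homeomorph_cube_closedBall (E := E)
  let e' : C(Fin (Module.finrank ℝ E) → I, closedBall (0 : E) 1) := e
  let H' : (f.comp e').HomotopyRel (g.comp e') (Cube.boundary _) :=
    { toContinuousMap := H.toContinuousMap.comp ((ContinuousMap.id I).prodMap e')
      map_zero_left := fun x => H.apply_zero (e x)
      map_one_left := fun x => H.apply_one (e x)
      prop' := fun t x hx => H.eq_fst t ((he x).1 hx) }
  have hH' : Set.range H' ⊆ Set.range H := Set.range_comp_subset_range (Prod.map id e) H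
  have hcomp (u : C(closedBall (0 : E) 1, X)) : Set.range (u.comp e') = Set.range u :=
    e.surjective.range_comp u
  have hrange := range_subset_range_of_cube_homotopyRel (hf.comp e.injective) H'
    (measure_mono_null hH' (by rwa [Fintype.card_fin]))
  rwa [hcomp f, hcomp g] at hrange

theorem embedded_disks_with_same_boundary_eq_general [FiniteDimensional ℝ E] [MetricSpace X]
    [MeasurableSpace X] [BorelSpace X] {f g : C(closedBall (0 : E) 1, X)}
    (hf : Function.Injective f) (hg : Function.Injective g)
    (H : f.HomotopyRel g {x | ‖(x : E)‖ = 1})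
    (hH : μH[(Module.finrank ℝ E : ℝ) + 1] (Set.range H) = 0) : Set.range f = Set.range g := by
  have hsymm : Set.range H.symm ⊆ Set.range H := by
    rintro _ ⟨p, rfl⟩
    exact ⟨(unitInterval.symm p.1, p.2), rfl⟩
  exact (range_subset_range_of_closedBall_homotopyRel hf H hH).antisymm
    (range_subset_range_of_closedBall_homotopyRel hg H.symm (measure_mono_null hsymm hH))

end Disks

/-- **Disks with common boundary coincide.** Suppose `Δ₁, Δ₂` are two embedded `n`-disks in a
metric space `X` which agree on the boundary sphere `∂Dⁿ`. If `X` is contractible and its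
`(n+1)`-dimensional Hausdorff measure vanishes, then `Δ₁ = Δ₂` as subsets of `X`. -/
theorem embedded_disks_with_same_boundary_eq
    (n : ℕ) {X : Type*} [MetricSpace X] [MeasurableSpace X] [BorelSpace X]
    [ContractibleSpace X]
    (hX : μH[(n : ℝ) + 1] (Set.univ : Set X) = 0)
    (Δ₁ Δ₂ : C((Metric.closedBall (0 : EuclideanSpace ℝ (Fin n)) 1 : Set _), X))
    (h₁ : Topology.IsEmbedding Δ₁) (h₂ : Topology.IsEmbedding Δ₂)
    (hbd : ∀ x : (Metric.closedBall (0 : EuclideanSpace ℝ (Fin n)) 1 : Set _),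
      ‖(x : EuclideanSpace ℝ (Fin n))‖ = 1 → Δ₁ x = Δ₂ x) :
    Set.range Δ₁ = Set.range Δ₂ := by
  obtain ⟨H⟩ := homotopicRel_of_forall_norm_eq_one_imp_eq hbd
  exact embedded_disks_with_same_boundary_eq_general h₁.injective h₂.injective H
    (measure_mono_null (Set.subset_univ _) (by rwa [finrank_euclideanSpace_fin]))
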